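/- Let f ∈ MvPolynomial (Fin 3) ℂ be a nonzero homogeneous polynomial of degree 3. The set of points of the projective plane ℙ(ℂ³) (Projectivization ℂ (Fin 3 → ℂ)) whose (equivalently, some/every) nonzero representatives v ∈ ℂ³ satisfy f(v) = 0 and H_f(v) = 0 is an infinite set if and only if f is not irreducible. (For irreducible f the flex locus Fl(C(f)) of the cubic C(f) is finite; for reducible f it has dimension 1.) -/

import Mathlib

open MvPolynomial

/-- The Hessian `H_f = det (∂²f/∂xᵢ∂xⱼ)` of a cubic form `f`. -/
noncomputable def hess (f : MvPolynomial (Fin 3) ℂ) : MvPolynomial (Fin 3) ℂ :=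
  Matrix.det (Matrix.of fun i j : Fin 3 => pderiv i (pderiv j f))

/-!
On the line `l = 0` the Hessian matrix of `f = l q` is `∇l (∇q)ᵀ + ∇q (∇l)ᵀ`, of rank at most two,
so the flex locus of a reducible cubic contains that line.

Conversely let `f` be irreducible. Two distinct singular points would make the line joining them a
component, so if no point of the flex locus is smooth then it has at most one point. If it contains
a smooth point `p`, move `p` to `(0 : 1 : 0)` and its tangent to `z = 0`; the vanishing of the
Hessian at `p` says exactly that this tangent meets the cubic with multiplicity three at `p`, and
completing the square in `y` then gives the shape `b y²z + a x³ + m x²z + n xz² + r z³`. Modulo `f`,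
the Hessian of this cubic is, at `z = 1`, a nonzero polynomial in `x` alone.
-/

open scoped Matrix LinearAlgebra.Projectivization

section Homogeneity

variable {σ R : Type*} [CommSemiring R]

lemma eval_smul_of_isHomogeneous {f : MvPolynomial σ R} {n : ℕ} (hf : f.IsHomogeneous n)
    (c : R) (v : σ → R) : eval (c • v) f = c ^ n * eval v f := by
  rw [eval_eq, eval_eq, Finset.mul_sum]
  refine Finset.sum_congr rfl fun d hd => ?_
  have hd' : ∑ i ∈ d.support, d i = n := by
    simpa [Finsupp.weight_apply, Finsupp.sum] using hf (mem_support_iff.1 hd)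
  simp only [Pi.smul_apply, smul_eq_mul, mul_pow, Finset.prod_mul_distrib,
    Finset.prod_pow_eq_pow_sum, hd']
  ring

lemma isHomogeneous_det {n R : Type*} [Fintype n] [DecidableEq n] [CommRing R]
    {M : Matrix n n (MvPolynomial σ R)} {k : ℕ} (hM : ∀ i j, (M i j).IsHomogeneous k) :
    M.det.IsHomogeneous (Fintype.card n * k) := by
  rw [Matrix.det_apply']
  refine IsHomogeneous.sum _ _ _ fun τ _ => ?_
  have hprod : (∏ i, M (τ i) i).IsHomogeneous (Fintype.card n * k) := by
    simpa using IsHomogeneous.prod Finset.univ (fun i => M (τ i) i) (fun _ => k)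
      fun i _ => hM (τ i) i
  simpa using (isHomogeneous_C σ ((Equiv.Perm.sign τ : ℤ) : R)).mul hprod

lemma exists_eq_sum_C_mul_X_of_isHomogeneous_one [Fintype σ] {l : MvPolynomial σ R}
    (hl : l.IsHomogeneous 1) : ∃ a : σ → R, l = ∑ i, C (a i) * X i := by
  have hmem : l ∈ Submodule.span R (Set.range (X : σ → MvPolynomial σ R)) := by
    rwa [← homogeneousSubmodule_one_eq_span_X, mem_homogeneousSubmodule]
  obtain ⟨a, rfl⟩ := Submodule.mem_span_range_iff_exists_fun R |>.1 hmem
  exact ⟨a, by simp only [smul_eq_C_mul]⟩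

lemma eq_sum_antidiagonalTuple_of_isHomogeneous {n k : ℕ} {f : MvPolynomial (Fin n) R}
    (hf : f.IsHomogeneous k) : f = ∑ s ∈ Finset.Nat.antidiagonalTuple n k,
      C (coeff (Finsupp.equivFunOnFinite.symm s) f) * ∏ i, X i ^ s i := by
  have hmon (s : Fin n → ℕ) (a : R) :
      C a * ∏ i, X i ^ s i = monomial (Finsupp.equivFunOnFinite.symm s) a := by
    rw [monomial_eq, Finsupp.prod_fintype _ _ fun _ => pow_zero _]
    rfl
  have hzero (d : Fin n →₀ ℕ) (hd : ⇑d ∉ Finset.Nat.antidiagonalTuple n k) : coeff d f = 0 :=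
    hf.coeff_eq_zero fun h => hd <| Finset.Nat.mem_antidiagonalTuple.2 <|
      (Finsupp.degree_eq_sum d).symm.trans h
  ext d
  simp only [hmon, coeff_sum, coeff_monomial, Equiv.symm_apply_eq]
  rw [Finset.sum_ite_eq']
  split_ifs with hd
  · exact congrArg (coeff · f) (Finsupp.equivFunOnFinite.symm_apply_apply d).symm
  · exact hzero d hd

lemma homogeneousComponent_mul_of_totalDegree_le {p q : MvPolynomial σ R} {m n : ℕ}
    (hp : p.totalDegree ≤ m) (hq : q.totalDegree ≤ n) :
    homogeneousComponent (m + n) (p * q) = homogeneousComponent m p * homogeneousComponent n q := by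
  classical
  ext d
  have hterm : ∀ x ∈ Finset.HasAntidiagonal.antidiagonal d,
      coeff x.1 (homogeneousComponent m p) * coeff x.2 (homogeneousComponent n q) =
        if d.degree = m + n then coeff x.1 p * coeff x.2 q else 0 := by
    intro x hx
    obtain rfl := Finset.HasAntidiagonal.mem_antidiagonal.1 hx
    simp only [coeff_homogeneousComponent, map_add]
    rcases lt_trichotomy m x.1.degree with h | h | h
    · simp [coeff_eq_zero_of_totalDegree_lt (hp.trans_lt h)]
    · simp [← h]
    · by_cases h' : n < x.2.degree
      · simp [coeff_eq_zero_of_totalDegree_lt (hq.trans_lt h')]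
      · have hdeg : x.1.degree + x.2.degree ≠ m + n := by omega
        simp [h.ne, hdeg]
  rw [coeff_homogeneousComponent, coeff_mul, coeff_mul, Finset.sum_congr rfl hterm,
    Finset.sum_ite_irrel, Finset.sum_const_zero]

end Homogeneity

section Hessian

variable {σ R : Type*} [CommRing R]

/-- The matrix of second partial derivatives of a polynomial. -/
noncomputable def hessianMatrix (f : MvPolynomial σ R) : Matrix σ σ (MvPolynomial σ R) :=
  Matrix.of fun i j => pderiv i (pderiv j f)

/-- The Hessian (determinant) of a polynomial in any finite number of variables over a commutative
ring; for ternary forms over `ℂ` it is definitionally `hess`. -/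
noncomputable def hessian [Fintype σ] [DecidableEq σ] (f : MvPolynomial σ R) : MvPolynomial σ R :=
  (hessianMatrix f).det

/-- The gradient of the polynomial `f` at the point `v`. -/
noncomputable def gradientAt (f : MvPolynomial σ R) (v : σ → R) : σ → R :=
  fun i => eval v (pderiv i f)

lemma isHomogeneous_hessian [Fintype σ] [DecidableEq σ] {f : MvPolynomial σ R} {n : ℕ}
    (hf : f.IsHomogeneous n) : (hessian f).IsHomogeneous (Fintype.card σ * (n - 1 - 1)) :=
  isHomogeneous_det fun _ _ => hf.pderiv.pderiv

lemma dotProduct_gradientAt [Fintype σ] {f : MvPolynomial σ R} {n : ℕ} (hf : f.IsHomogeneous n)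
    (v : σ → R) : v ⬝ᵥ gradientAt f v = n * eval v f := by
  simpa [dotProduct, gradientAt] using congrArg (eval v) hf.sum_X_mul_pderiv

end Hessian

section LinearSubstitution

lemma pderiv_bind₁ {σ τ R : Type*} [Fintype σ] [CommSemiring R] (g : σ → MvPolynomial τ R)
    (f : MvPolynomial σ R) (i : τ) :
    pderiv i (bind₁ g f) = ∑ j, pderiv i (g j) * bind₁ g (pderiv j f) := by
  classical
  induction f using MvPolynomial.induction_on with
  | C a => simp
  | add p q hp hq => simp only [map_add, hp, hq, mul_add, Finset.sum_add_distrib]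
  | mul_X p k hp =>
    simp only [map_mul, map_add, bind₁_X_right, Derivation.leibniz, hp, smul_eq_mul, pderiv_X,
      mul_add, Finset.sum_add_distrib, Finset.mul_sum]
    congr 1
    · simp [Pi.single_apply, mul_comm]
    · exact Finset.sum_congr rfl fun j _ => by ring

variable {n R : Type*} [Fintype n] [CommRing R]

/-- The substitution `f(x) ↦ f(A x)` of linear forms, the rows of `A`, for the variables. -/
noncomputable def linSubst (A : Matrix n n R) : MvPolynomial n R →ₐ[R] MvPolynomial n R :=
  bind₁ A.toMvPolynomial

lemma eval_linSubst (A : Matrix n n R) (f : MvPolynomial n R) (v : n → R) :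
    eval v (linSubst A f) = eval (A *ᵥ v) f := by
  rw [linSubst, ← coe_aeval_eq_eval, RingHom.coe_coe, aeval_bind₁, aeval_eq_eval, aeval_eq_eval]
  simp only [Matrix.toMvPolynomial_eval_eq_apply]

lemma isHomogeneous_linSubst (A : Matrix n n R) {f : MvPolynomial n R} {k : ℕ}
    (hf : f.IsHomogeneous k) : (linSubst A f).IsHomogeneous k := by
  simpa only [one_mul, linSubst, bind₁] using
    hf.aeval A.toMvPolynomial A.toMvPolynomial_isHomogeneous

lemma linSubst_linSubst (A B : Matrix n n R) (f : MvPolynomial n R) :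
    linSubst A (linSubst B f) = linSubst (B * A) f := by
  simp only [linSubst, bind₁_bind₁, ← Matrix.toMvPolynomial_mul]

lemma linSubst_X (A : Matrix n n R) (i : n) : linSubst A (X i) = ∑ j, C (A i j) * X j := by
  simp only [linSubst, bind₁_X_right, Matrix.toMvPolynomial, C_mul_X_eq_monomial]

lemma pderiv_linSubst (A : Matrix n n R) (f : MvPolynomial n R) (i : n) :
    pderiv i (linSubst A f) = ∑ j, C (A j i) * linSubst A (pderiv j f) := by
  classical
  have hrow (j : n) : pderiv i (A.toMvPolynomial j) = C (A j i) := by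
    simp [Matrix.toMvPolynomial, ← C_mul_X_eq_monomial, pderiv_X, Pi.single_apply]
  simp only [linSubst, pderiv_bind₁, hrow]

lemma gradientAt_linSubst (A : Matrix n n R) (f : MvPolynomial n R) (v : n → R) :
    gradientAt (linSubst A f) v = gradientAt f (A *ᵥ v) ᵥ* A := by
  ext i
  simp only [gradientAt, pderiv_linSubst, map_sum, map_mul, eval_C, eval_linSubst,
    Matrix.vecMul, dotProduct, mul_comm]

variable [DecidableEq n]

lemma hessianMatrix_linSubst (A : Matrix n n R) (f : MvPolynomial n R) :
    hessianMatrix (linSubst A f) =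
      (A.map C)ᵀ * (linSubst A).mapMatrix (hessianMatrix f) * A.map C := by
  ext1 i j
  simp only [hessianMatrix, Matrix.of_apply, pderiv_linSubst, map_sum, pderiv_C_mul,
    Matrix.mul_apply, Matrix.transpose_apply, Matrix.map_apply, AlgHom.mapMatrix_apply,
    Finset.mul_sum, Finset.sum_mul]
  exact Finset.sum_congr rfl fun k _ => Finset.sum_congr rfl fun l _ => by ring

lemma linSubst_one (f : MvPolynomial n R) : linSubst 1 f = f := by
  rw [linSubst, Matrix.toMvPolynomial_one, bind₁_X_left, AlgHom.id_apply]

lemma hessian_linSubst (A : Matrix n n R) (f : MvPolynomial n R) :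
    hessian (linSubst A f) = C (A.det ^ 2) * linSubst A (hessian f) := by
  have hC : (A.map (C : R →+* MvPolynomial n R)).det = C A.det := (RingHom.map_det C A).symm
  simp only [hessian, hessianMatrix_linSubst, Matrix.det_mul, Matrix.det_transpose, hC,
    AlgHom.map_det, map_pow]
  ring

lemma irreducible_linSubst_iff (g : GL n R) {f : MvPolynomial n R} :
    Irreducible (linSubst g.val f) ↔ Irreducible f := by
  let e : MvPolynomial n R ≃ₐ[R] MvPolynomial n R :=
    AlgEquiv.ofAlgHom (linSubst g.val) (linSubst g.val⁻¹)
      (AlgHom.ext fun p => by simp [linSubst_linSubst, linSubst_one])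
      (AlgHom.ext fun p => by simp [linSubst_linSubst, linSubst_one])
  exact MulEquiv.irreducible_iff e

end LinearSubstitution

section LinearAlgebra

variable {K V : Type*} [Field K] [AddCommGroup V] [Module K V]

lemma lt_finrank_ker_of_succ_lt_finrank {n : ℕ} (φ : V →ₗ[K] K)
    (hn : n + 1 < Module.finrank K V) : n < Module.finrank K (LinearMap.ker φ) := by
  have : FiniteDimensional K V := Module.finite_of_finrank_pos (by omega)
  have hrange : Module.finrank K (LinearMap.range φ) ≤ 1 :=
    (Submodule.finrank_le _).trans_eq (Module.finrank_self K)
  have := φ.finrank_range_add_finrank_ker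
  omega

lemma exists_linearIndependent_pair_mem {W : Submodule K V} (hW : 1 < Module.finrank K W)
    {p : V} (hp : p ∈ W) (hp0 : p ≠ 0) : ∃ u ∈ W, LinearIndependent K ![p, u] := by
  obtain ⟨u, hu⟩ := exists_linearIndependent_pair_of_one_lt_finrank hW
    (x := ⟨p, hp⟩) (by simpa using hp0)
  rw [LinearIndependent.pair_iff] at hu
  exact ⟨u, u.2, LinearIndependent.pair_iff.2 fun s t h => hu s t (Subtype.ext h)⟩

lemma infinite_setOf_rep_mem [Infinite K] {W : Submodule K V} (hW : 1 < Module.finrank K W) :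
    {x : ℙ K V | x.rep ∈ W}.Infinite := by
  have : Module.Finite K W := Module.finite_of_finrank_pos (zero_lt_one.trans hW)
  obtain ⟨⟨p, hp⟩, hp0⟩ := Module.finrank_pos_iff_exists_ne_zero.1 (zero_lt_one.trans hW)
  obtain ⟨u, hu, hpu⟩ := exists_linearIndependent_pair_mem hW hp (by simpa using hp0)
  have hne (t : K) : (1 : K) • p + t • u ≠ 0 := fun h =>
    one_ne_zero (LinearIndependent.pair_iff.1 hpu 1 t h).1
  refine Set.infinite_of_injective_forall_mem
    (f := fun t : K => Projectivization.mk K ((1 : K) • p + t • u) (hne t)) ?_ fun t => ?_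
  · intro s t hst
    obtain ⟨c, hc⟩ := (Projectivization.mk_eq_mk_iff' K _ _ (hne s) (hne t)).1 hst
    rw [smul_add, smul_smul, smul_smul] at hc
    obtain ⟨h1, hs⟩ := hpu.eq_of_pair hc
    rw [← hs, ← mul_one c, h1, one_mul]
  · obtain ⟨c, hc⟩ := Projectivization.exists_smul_eq_mk_rep K _ (hne t)
    rw [Set.mem_ofPred_eq, ← hc]
    exact W.smul_mem _ (W.add_mem (W.smul_mem _ hp) (W.smul_mem _ hu))

lemma exists_generalLinearGroup_mulVec_single_eq {n : ℕ} {v : Fin n → Fin (n + 1) → K}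
    (hv : LinearIndependent K v) :
    ∃ g : GL (Fin (n + 1)) K, ∀ i, g.val *ᵥ Pi.single i.castSucc 1 = v i := by
  obtain ⟨w, hw⟩ := exists_linearIndependent_snoc_of_lt_finrank hv (by simp)
  let A : Matrix (Fin (n + 1)) (Fin (n + 1)) K := (Matrix.of (Fin.snoc v w))ᵀ
  obtain ⟨g, hg⟩ : IsUnit A := Matrix.linearIndependent_cols_iff_isUnit.1 hw
  refine ⟨g, fun i => ?_⟩
  rw [hg, Matrix.mulVec_single_one]
  exact Fin.snoc_castSucc (α := fun _ => Fin (n + 1) → K) w v i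

end LinearAlgebra

section FlexLocus

variable {n K : Type*} [Field K]

lemma eval_mk_rep_eq_zero_iff {f : MvPolynomial n K} {k : ℕ} (hf : f.IsHomogeneous k)
    {v : n → K} (hv : v ≠ 0) : eval (Projectivization.mk K v hv).rep f = 0 ↔ eval v f = 0 := by
  obtain ⟨c, hc⟩ := Projectivization.exists_smul_eq_mk_rep K v hv
  rw [← hc, Units.smul_def, eval_smul_of_isHomogeneous hf, mul_eq_zero,
    or_iff_right (pow_ne_zero k c.ne_zero)]

variable [Fintype n] [DecidableEq n]

/-- The flex locus of the projective hypersurface `f = 0`: the set of points at which both `f` and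
its Hessian vanish, so that the singular points of a form of degree at least two are included. As in
the definition of `hess`, vanishing is tested on the chosen representative of a point. -/
def flexLocus (f : MvPolynomial n K) : Set (ℙ K (n → K)) :=
  {x | eval x.rep f = 0 ∧ eval x.rep (hessian f) = 0}

lemma mk_mem_flexLocus_iff {f : MvPolynomial n K} {k : ℕ} (hf : f.IsHomogeneous k)
    {v : n → K} (hv : v ≠ 0) :
    Projectivization.mk K v hv ∈ flexLocus f ↔ eval v f = 0 ∧ eval v (hessian f) = 0 :=
  and_congr (eval_mk_rep_eq_zero_iff hf hv) (eval_mk_rep_eq_zero_iff (isHomogeneous_hessian hf) hv)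

lemma flexLocus_linSubst {f : MvPolynomial n K} {k : ℕ} (hf : f.IsHomogeneous k) (g : GL n K) :
    flexLocus (linSubst g.val f) = (g • ·) ⁻¹' flexLocus f := by
  have hdet : g.val.det ^ 2 ≠ 0 := pow_ne_zero 2 g.det_ne_zero
  ext x
  induction x with | h v hv
  rw [Set.mem_preimage, Projectivization.smul_mk, mk_mem_flexLocus_iff hf,
    mk_mem_flexLocus_iff (isHomogeneous_linSubst _ hf), hessian_linSubst, map_mul, eval_C,
    mul_eq_zero, or_iff_right hdet, eval_linSubst, eval_linSubst]
  rfl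

lemma flexLocus_finite_of_linSubst {f : MvPolynomial n K} {k : ℕ} (hf : f.IsHomogeneous k)
    (g : GL n K) (hfin : (flexLocus (linSubst g.val f)).Finite) :
    (flexLocus f).Finite := by
  rw [flexLocus_linSubst hf] at hfin
  exact hfin.of_preimage (MulAction.surjective g)

end FlexLocus

section LinearFactor

variable {n : Type*}

lemma hessianMatrix_linear_mul_eval {R : Type*} [CommRing R] {l : MvPolynomial n R}
    (hl : l.IsHomogeneous 1) (q : MvPolynomial n R) {v : n → R} (hv : eval v l = 0) :
    (hessianMatrix (l * q)).map (eval v) =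
      Matrix.vecMulVec (gradientAt l v) (gradientAt q v) +
        Matrix.vecMulVec (gradientAt q v) (gradientAt l v) := by
  have hconst (i j : n) : pderiv i (pderiv j l) = 0 := by
    rw [(totalDegree_eq_zero_iff_eq_C).1 (Nat.le_zero.1 hl.pderiv.totalDegree_le), pderiv_C]
  ext i j
  simp only [hessianMatrix, gradientAt, Matrix.map_apply, Matrix.of_apply, Matrix.add_apply,
    Matrix.vecMulVec_apply, Derivation.leibniz, smul_eq_mul, map_add, map_mul, hconst, hv,
    map_zero]
  ring

variable {K : Type*} [Field K]

lemma det_vecMulVec_add_vecMulVec [Fintype n] [DecidableEq n] (hn : 2 < Fintype.card n)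
    (a b c d : n → K) : (Matrix.vecMulVec a b + Matrix.vecMulVec c d).det = 0 := by
  have hfactor : Matrix.vecMulVec a b + Matrix.vecMulVec c d =
      (Matrix.of ![a, c])ᵀ * Matrix.of ![b, d] := by
    ext i j
    simp [Matrix.vecMulVec_apply, Matrix.mul_apply]
  by_contra hdet
  have hrank := Matrix.rank_of_isUnit _ ((Matrix.isUnit_iff_isUnit_det _).2 (Ne.isUnit hdet))
  rw [hfactor] at hrank
  have hle := (Matrix.rank_mul_le_right (Matrix.of ![a, c])ᵀ (Matrix.of ![b, d])).trans
    (Matrix.rank_le_card_height _)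
  rw [hrank, Fintype.card_fin] at hle
  exact hn.not_ge hle

lemma infinite_flexLocus_linear_mul [Fintype n] [DecidableEq n] [Infinite K]
    (hn : 2 < Fintype.card n) {l : MvPolynomial n K} (hl : l.IsHomogeneous 1)
    (q : MvPolynomial n K) : (flexLocus (l * q)).Infinite := by
  obtain ⟨a, ha⟩ := exists_eq_sum_C_mul_X_of_isHomogeneous_one hl
  have hker : 1 < Module.finrank K (LinearMap.ker (dotProductBilin K K a)) :=
    lt_finrank_ker_of_succ_lt_finrank _ (by simpa using hn)
  refine (infinite_setOf_rep_mem hker).mono fun x hx => ?_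
  have hlx : eval x.rep l = 0 := by
    simpa [ha, dotProduct] using LinearMap.mem_ker.1 hx
  refine ⟨by rw [map_mul, hlx, zero_mul], ?_⟩
  rw [hessian, RingHom.map_det, RingHom.mapMatrix_apply, hessianMatrix_linear_mul_eval hl q hlx,
    det_vecMulVec_add_vecMulVec hn]

lemma one_le_totalDegree_of_not_isUnit {p : MvPolynomial n K} (hp : p ≠ 0) (hu : ¬ IsUnit p) :
    1 ≤ p.totalDegree := by
  by_contra! hdeg
  have hdeg0 := Nat.lt_one_iff.1 hdeg
  refine hu (isUnit_iff_totalDegree_of_isReduced.2 ⟨Ne.isUnit fun h => hp ?_, hdeg0⟩)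
  rw [totalDegree_eq_zero_iff_eq_C.1 hdeg0, h, C_0]

lemma exists_linear_mul_of_not_irreducible {f : MvPolynomial n K}
    (hf : f.IsHomogeneous 3) (hred : ¬ Irreducible f) :
    ∃ l q : MvPolynomial n K, l.IsHomogeneous 1 ∧ f = l * q := by
  rcases eq_or_ne f 0 with rfl | hf0
  · exact ⟨0, 0, isHomogeneous_zero _ _ _, (mul_zero 0).symm⟩
  have hf3 : f.totalDegree = 3 := hf.totalDegree hf0
  have hunit : ¬ IsUnit f := fun h => by
    simpa [hf3] using (isUnit_iff_totalDegree_of_isReduced.1 h).2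
  obtain ⟨p, q, rfl, hp, hq⟩ : ∃ p q, f = p * q ∧ ¬ IsUnit p ∧ ¬ IsUnit q := by
    simpa [irreducible_iff, hunit] using hred
  have hp1 := one_le_totalDegree_of_not_isUnit (left_ne_zero_of_mul hf0) hp
  have hq1 := one_le_totalDegree_of_not_isUnit (right_ne_zero_of_mul hf0) hq
  have hsum := totalDegree_mul_of_isDomain (left_ne_zero_of_mul hf0) (right_ne_zero_of_mul hf0)
  have htop : p * q =
      homogeneousComponent p.totalDegree p * homogeneousComponent q.totalDegree q := by
    rw [← homogeneousComponent_mul_of_totalDegree_le le_rfl le_rfl,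
      homogeneousComponent_of_mem hf, if_pos (by omega)]
  obtain hp1 | hq1 : p.totalDegree = 1 ∨ q.totalDegree = 1 := by omega
  · exact ⟨_, _, hp1 ▸ homogeneousComponent_isHomogeneous _ p, htop⟩
  · exact ⟨_, _, hq1 ▸ homogeneousComponent_isHomogeneous _ q, htop.trans (mul_comm _ _)⟩

lemma not_irreducible_of_X_dvd {f : MvPolynomial n K} {k : ℕ} (hf : f.IsHomogeneous k)
    (hk : k ≠ 1) {i : n} (hi : X i ∣ f) : ¬ Irreducible f := by
  intro hirr
  have hX : ¬ IsUnit (X i : MvPolynomial n K) := fun h => by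
    simpa using (isUnit_iff_totalDegree_of_isReduced.1 h).2
  obtain ⟨u, hu⟩ := (hirr.dvd_iff.1 hi).resolve_left hX
  have hdeg := hf.totalDegree hirr.ne_zero
  have hadd := totalDegree_mul_of_isDomain (f := f) (g := ↑u) hirr.ne_zero u.ne_zero
  rw [hu, totalDegree_X, hdeg, (isUnit_iff_totalDegree_of_isReduced.1 u.isUnit).2] at hadd
  exact hk hadd.symm

end LinearFactor

/-- The coefficients of a cubic form in the three variables `x = X 0`, `y = X 1`, `z = X 2`, each
field being named after its monomial. -/
structure TernaryCubic (R : Type*) where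
  (xxx xxy xxz xyy xyz xzz yyy yyz yzz zzz : R)

namespace TernaryCubic

section CommRing

variable {R : Type*} [CommRing R]

/-- The cubic form with the given coefficients. -/
noncomputable def toPoly (c : TernaryCubic R) : MvPolynomial (Fin 3) R :=
  C c.xxx * X 0 ^ 3 + C c.xxy * (X 0 ^ 2 * X 1) + C c.xxz * (X 0 ^ 2 * X 2) +
    C c.xyy * (X 0 * X 1 ^ 2) + C c.xyz * (X 0 * X 1 * X 2) + C c.xzz * (X 0 * X 2 ^ 2) +
    C c.yyy * X 1 ^ 3 + C c.yyz * (X 1 ^ 2 * X 2) + C c.yzz * (X 1 * X 2 ^ 2) + C c.zzz * X 2 ^ 3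

lemma isHomogeneous_toPoly (c : TernaryCubic R) : c.toPoly.IsHomogeneous 3 := by
  have h3 (i : Fin 3) : (X i ^ 3 : MvPolynomial (Fin 3) R).IsHomogeneous 3 :=
    isHomogeneous_X_pow i 3
  have h21 (i j : Fin 3) : (X i ^ 2 * X j : MvPolynomial (Fin 3) R).IsHomogeneous 3 :=
    (isHomogeneous_X_pow i 2).mul (isHomogeneous_X R j)
  have h12 (i j : Fin 3) : (X i * X j ^ 2 : MvPolynomial (Fin 3) R).IsHomogeneous 3 :=
    (isHomogeneous_X R i).mul (isHomogeneous_X_pow j 2)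
  have h111 : (X 0 * X 1 * X 2 : MvPolynomial (Fin 3) R).IsHomogeneous 3 :=
    ((isHomogeneous_X R 0).mul (isHomogeneous_X R 1)).mul (isHomogeneous_X R 2)
  exact ((h3 0).C_mul _).add ((h21 0 1).C_mul _) |>.add ((h21 0 2).C_mul _)
    |>.add ((h12 0 1).C_mul _) |>.add (h111.C_mul _) |>.add ((h12 0 2).C_mul _)
    |>.add ((h3 1).C_mul _) |>.add ((h21 1 2).C_mul _) |>.add ((h12 1 2).C_mul _)
    |>.add ((h3 2).C_mul _)

lemma exists_toPoly_eq {f : MvPolynomial (Fin 3) R} (hf : f.IsHomogeneous 3) :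
    ∃ c : TernaryCubic R, c.toPoly = f := by
  let a (s : Fin 3 → ℕ) : R := coeff (Finsupp.equivFunOnFinite.symm s) f
  have htuples : Finset.Nat.antidiagonalTuple 3 3 = {![3, 0, 0], ![2, 1, 0], ![2, 0, 1],
      ![1, 2, 0], ![1, 1, 1], ![1, 0, 2], ![0, 3, 0], ![0, 2, 1], ![0, 1, 2], ![0, 0, 3]} := by
    decide
  refine ⟨⟨a ![3, 0, 0], a ![2, 1, 0], a ![2, 0, 1], a ![1, 2, 0], a ![1, 1, 1], a ![1, 0, 2],
    a ![0, 3, 0], a ![0, 2, 1], a ![0, 1, 2], a ![0, 0, 3]⟩, ?_⟩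
  rw [eq_sum_antidiagonalTuple_of_isHomogeneous hf, htuples]
  simp [toPoly, Fin.prod_univ_three, a, add_assoc]

lemma eval_toPoly (c : TernaryCubic R) (x y z : R) :
    eval ![x, y, z] c.toPoly = c.xxx * x ^ 3 + c.xxy * (x ^ 2 * y) + c.xxz * (x ^ 2 * z) +
      c.xyy * (x * y ^ 2) + c.xyz * (x * y * z) + c.xzz * (x * z ^ 2) + c.yyy * y ^ 3 +
      c.yyz * (y ^ 2 * z) + c.yzz * (y * z ^ 2) + c.zzz * z ^ 3 := by
  simp [toPoly]

lemma gradientAt_toPoly (c : TernaryCubic R) (x y z : R) :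
    gradientAt c.toPoly ![x, y, z] =
      ![3 * c.xxx * x ^ 2 + 2 * c.xxy * x * y + 2 * c.xxz * x * z + c.xyy * y ^ 2 +
          c.xyz * y * z + c.xzz * z ^ 2,
        c.xxy * x ^ 2 + 2 * c.xyy * x * y + c.xyz * x * z + 3 * c.yyy * y ^ 2 +
          2 * c.yyz * y * z + c.yzz * z ^ 2,
        c.xxz * x ^ 2 + c.xyz * x * y + 2 * c.xzz * x * z + c.yyz * y ^ 2 +
          2 * c.yzz * y * z + 3 * c.zzz * z ^ 2] := by
  ext i
  fin_cases i <;> simp [gradientAt, toPoly, pderiv_X] <;> ring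

lemma eval_hessian_toPoly (c : TernaryCubic R) (x y z : R) :
    eval ![x, y, z] (hessian c.toPoly) = Matrix.det
      !![6 * c.xxx * x + 2 * c.xxy * y + 2 * c.xxz * z,
          2 * c.xxy * x + 2 * c.xyy * y + c.xyz * z, 2 * c.xxz * x + c.xyz * y + 2 * c.xzz * z;
        2 * c.xxy * x + 2 * c.xyy * y + c.xyz * z, 2 * c.xyy * x + 6 * c.yyy * y + 2 * c.yyz * z,
          c.xyz * x + 2 * c.yyz * y + 2 * c.yzz * z;
        2 * c.xxz * x + c.xyz * y + 2 * c.xzz * z, c.xyz * x + 2 * c.yyz * y + 2 * c.yzz * z,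
          2 * c.xzz * x + 2 * c.yzz * y + 6 * c.zzz * z] := by
  have h2 (i : Fin 3) : pderiv i (2 : MvPolynomial (Fin 3) R) = 0 := (pderiv i).map_natCast 2
  have h3 (i : Fin 3) : pderiv i (3 : MvPolynomial (Fin 3) R) = 0 := (pderiv i).map_natCast 3
  rw [hessian, RingHom.map_det, RingHom.mapMatrix_apply]
  congr 1
  ext i j
  fin_cases i <;> fin_cases j <;> simp [hessianMatrix, toPoly, pderiv_X, h2, h3] <;> ring

lemma X_dvd_toPoly {c : TernaryCubic R} (hxxx : c.xxx = 0) (hxxy : c.xxy = 0) (hxyy : c.xyy = 0)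
    (hyyy : c.yyy = 0) : X 2 ∣ c.toPoly := by
  refine ⟨C c.xxz * X 0 ^ 2 + C c.xyz * (X 0 * X 1) + C c.xzz * (X 0 * X 2) +
    C c.yyz * X 1 ^ 2 + C c.yzz * (X 1 * X 2) + C c.zzz * X 2 ^ 2, ?_⟩
  simp only [toPoly, hxxx, hxxy, hxyy, hyyy, map_zero, zero_mul]
  ring

end CommRing

section Field

variable {K : Type*} [Field K]

lemma exists_linSubst_eq_toPoly {f : MvPolynomial (Fin 3) K} (hf : f.IsHomogeneous 3)
    {p q : Fin 3 → K} (hpq : LinearIndependent K ![p, q]) :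
    ∃ (g : GL (Fin 3) K) (c : TernaryCubic K), linSubst g.val f = c.toPoly ∧
      g.val *ᵥ ![1, 0, 0] = p ∧ g.val *ᵥ ![0, 1, 0] = q := by
  obtain ⟨g, hg⟩ := exists_generalLinearGroup_mulVec_single_eq hpq
  obtain ⟨c, hc⟩ := exists_toPoly_eq (isHomogeneous_linSubst g.val hf)
  have h0 : Pi.single (Fin.castSucc 0) 1 = (![1, 0, 0] : Fin 3 → K) := by
    ext i; fin_cases i <;> rfl
  have h1 : Pi.single (Fin.castSucc 1) 1 = (![0, 1, 0] : Fin 3 → K) := by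
    ext i; fin_cases i <;> rfl
  exact ⟨g, c, hc.symm, h0 ▸ hg 0, h1 ▸ hg 1⟩

lemma not_irreducible_of_gradientAt_eq_zero (h3 : (3 : K) ≠ 0) {f : MvPolynomial (Fin 3) K}
    (hf : f.IsHomogeneous 3) {p q : Fin 3 → K} (hpq : LinearIndependent K ![p, q])
    (hp : gradientAt f p = 0) (hq : gradientAt f q = 0) : ¬ Irreducible f := by
  obtain ⟨g, c, hgc, hgp, hgq⟩ := exists_linSubst_eq_toPoly hf hpq
  have h0 : gradientAt c.toPoly ![1, 0, 0] = 0 := by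
    rw [← hgc, gradientAt_linSubst, hgp, hp, Matrix.zero_vecMul]
  have h1 : gradientAt c.toPoly ![0, 1, 0] = 0 := by
    rw [← hgc, gradientAt_linSubst, hgq, hq, Matrix.zero_vecMul]
  obtain ⟨hxxx, hxxy, -⟩ : c.xxx = 0 ∧ c.xxy = 0 ∧ c.xxz = 0 := by
    simpa [gradientAt_toPoly, h3] using h0
  obtain ⟨hxyy, hyyy, -⟩ : c.xyy = 0 ∧ c.yyy = 0 ∧ c.yyz = 0 := by
    simpa [gradientAt_toPoly, h3] using h1
  rw [← irreducible_linSubst_iff g, hgc]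
  exact not_irreducible_of_X_dvd c.isHomogeneous_toPoly (by norm_num)
    (X_dvd_toPoly hxxx hxxy hxyy hyyy)

/-- The shape `b y²z + a x³ + m x²z + n xz² + r z³` with `a, b ≠ 0` of a ternary cubic, in which the
point `(0 : 1 : 0)` is a smooth flex with tangent line `z = 0`. -/
structure IsWeierstrass (c : TernaryCubic K) : Prop where
  xxy : c.xxy = 0
  xyy : c.xyy = 0
  xyz : c.xyz = 0
  yyy : c.yyy = 0
  yzz : c.yzz = 0
  xxx_ne_zero : c.xxx ≠ 0
  yyz_ne_zero : c.yyz ≠ 0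

lemma exists_linSubst_eq_of_smooth_flex (h2 : (2 : K) ≠ 0) {f : MvPolynomial (Fin 3) K}
    (hf : f.IsHomogeneous 3) {p : Fin 3 → K} (hp : p ≠ 0) (hfp : eval p f = 0)
    (hHp : eval p (hessian f) = 0) (hgrad : gradientAt f p ≠ 0) :
    ∃ (g : GL (Fin 3) K) (c : TernaryCubic K), linSubst g.val f = c.toPoly ∧
      c.yyy = 0 ∧ c.xyy = 0 ∧ c.xxy = 0 ∧ c.yyz ≠ 0 := by
  have hker : 1 < Module.finrank K (LinearMap.ker (dotProductBilin K K (gradientAt f p))) :=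
    lt_finrank_ker_of_succ_lt_finrank _ (by simp)
  have hpker : p ∈ LinearMap.ker (dotProductBilin K K (gradientAt f p)) := by
    simp [dotProduct_comm _ p, dotProduct_gradientAt hf, hfp]
  obtain ⟨u, hu, hpu⟩ := exists_linearIndependent_pair_mem hker hpker hp
  obtain ⟨g, c, hgc, hgu, hgp⟩ :=
    exists_linSubst_eq_toPoly hf (LinearIndependent.pair_symm_iff.1 hpu)
  have hgradc : gradientAt c.toPoly ![0, 1, 0] = gradientAt f p ᵥ* g.val := by
    rw [← hgc, gradientAt_linSubst, hgp]
  have hyyy : c.yyy = 0 := by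
    simpa [hgc, eval_toPoly, hgp, hfp] using eval_linSubst g.val f ![0, 1, 0]
  have hxyy : c.xyy = 0 := by
    have h : gradientAt c.toPoly ![0, 1, 0] ⬝ᵥ ![1, 0, 0] = 0 := by
      rw [hgradc, ← Matrix.dotProduct_mulVec, hgu]
      simpa using hu
    simpa [gradientAt_toPoly, dotProduct, Fin.sum_univ_three] using h
  have hyyz : c.yyz ≠ 0 := by
    have h : gradientAt c.toPoly ![0, 1, 0] ≠ 0 := by
      rw [hgradc]
      exact fun h => hgrad (Matrix.vecMul_injective_of_isUnit g.isUnit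
        (h.trans (Matrix.zero_vecMul _).symm))
    simpa [gradientAt_toPoly, hyyy, hxyy] using h
  have hxxy : c.xxy = 0 := by
    have h : eval ![0, 1, 0] (hessian c.toPoly) = 0 := by
      rw [← hgc, hessian_linSubst, map_mul, eval_linSubst, hgp, hHp, mul_zero]
    rw [eval_hessian_toPoly] at h
    simpa [Matrix.det_fin_three, hyyy, hxyy, h2, hyyz] using h
  exact ⟨g, c, hgc, hyyy, hxyy, hxxy, hyyz⟩

lemma exists_linSubst_toPoly_eq_isWeierstrass (h2 : (2 : K) ≠ 0) {c : TernaryCubic K}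
    (hyyy : c.yyy = 0) (hxyy : c.xyy = 0) (hxxy : c.xxy = 0) (hyyz : c.yyz ≠ 0)
    (hxxx : c.xxx ≠ 0) :
    ∃ (g : GL (Fin 3) K) (w : TernaryCubic K),
      linSubst g.val c.toPoly = w.toPoly ∧ w.IsWeierstrass := by
  obtain ⟨d, hd⟩ : ∃ d, c.xyz = 2 * c.yyz * d := ⟨c.xyz / (2 * c.yyz), by field_simp⟩
  obtain ⟨e, he⟩ : ∃ e, c.yzz = 2 * c.yyz * e := ⟨c.yzz / (2 * c.yyz), by field_simp⟩
  let A : Matrix (Fin 3) (Fin 3) K := !![1, 0, 0; -d, 1, -e; 0, 0, 1]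
  obtain ⟨g, hg⟩ : ∃ g : GL (Fin 3) K, g.val = A :=
    ⟨Matrix.GeneralLinearGroup.mkOfDetNeZero A (by simp [A, Matrix.det_fin_three]), rfl⟩
  let w : TernaryCubic K :=
    { xxx := c.xxx, xxy := 0, xxz := c.xxz - c.yyz * d ^ 2, xyy := 0, xyz := 0,
      xzz := c.xzz - 2 * c.yyz * d * e, yyy := 0, yyz := c.yyz, yzz := 0,
      zzz := c.zzz - c.yyz * e ^ 2 }
  refine ⟨g, w, ?_, ⟨rfl, rfl, rfl, rfl, rfl, hxxx, hyyz⟩⟩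
  have hx : linSubst A (X 0) = X 0 := by
    simp [linSubst_X, A, Fin.sum_univ_three]
  have hy : linSubst A (X 1) = -(C d * X 0) + X 1 + -(C e * X 2) := by
    simp [linSubst_X, A, Fin.sum_univ_three]
  have hz : linSubst A (X 2) = X 2 := by
    simp [linSubst_X, A, Fin.sum_univ_three]
  rw [hg]
  simp only [toPoly, map_add, map_mul, map_pow, hx, hy, hz, algHom_C, algebraMap_eq, w, hyyy,
    hxyy, hxxy, hd, he, map_sub, map_zero, map_ofNat]
  ring

lemma exists_linSubst_eq_isWeierstrass (h2 : (2 : K) ≠ 0) {f : MvPolynomial (Fin 3) K}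
    (hf : f.IsHomogeneous 3) (hirr : Irreducible f) {p : Fin 3 → K} (hp : p ≠ 0)
    (hfp : eval p f = 0) (hHp : eval p (hessian f) = 0) (hgrad : gradientAt f p ≠ 0) :
    ∃ (g : GL (Fin 3) K) (w : TernaryCubic K),
      linSubst g.val f = w.toPoly ∧ w.IsWeierstrass := by
  obtain ⟨g, c, hgc, hyyy, hxyy, hxxy, hyyz⟩ :=
    exists_linSubst_eq_of_smooth_flex h2 hf hp hfp hHp hgrad
  have hxxx : c.xxx ≠ 0 := fun hxxx => by
    rw [← irreducible_linSubst_iff g, hgc] at hirr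
    exact not_irreducible_of_X_dvd c.isHomogeneous_toPoly (by norm_num)
      (X_dvd_toPoly hxxx hxxy hxyy hyyy) hirr
  obtain ⟨g', w, hw, hweier⟩ :=
    exists_linSubst_toPoly_eq_isWeierstrass h2 hyyy hxyy hxxy hyyz hxxx
  exact ⟨g * g', w, by rw [Units.val_mul, ← linSubst_linSubst, hgc, hw], hweier⟩

/-- The polynomial whose roots are the `x`-coordinates of the affine flexes of a cubic in
Weierstrass shape. -/
noncomputable def threeDivisionPoly (c : TernaryCubic K) : Polynomial K :=
  .C (3 * c.xxx ^ 2) * .X ^ 4 + .C (4 * c.xxx * c.xxz) * .X ^ 3 + .C (6 * c.xxx * c.xzz) * .X ^ 2 +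
    .C (12 * c.xxx * c.zzz) * .X + .C (4 * c.xxz * c.zzz - c.xzz ^ 2)

namespace IsWeierstrass

variable {c : TernaryCubic K} (hc : c.IsWeierstrass)
include hc

lemma threeDivisionPoly_ne_zero (h3 : (3 : K) ≠ 0) : c.threeDivisionPoly ≠ 0 := fun h => by
  have h4 : c.threeDivisionPoly.coeff 4 = 3 * c.xxx ^ 2 := by
    simp only [threeDivisionPoly, Polynomial.coeff_add, Polynomial.coeff_C_mul,
      Polynomial.coeff_X_pow, Polynomial.coeff_X, Polynomial.coeff_C]
    norm_num
  simp [h, h3, hc.xxx_ne_zero] at h4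

lemma eval_toPoly (x y z : K) : eval ![x, y, z] c.toPoly = c.yyz * (y ^ 2 * z) +
    c.xxx * x ^ 3 + c.xxz * (x ^ 2 * z) + c.xzz * (x * z ^ 2) + c.zzz * z ^ 3 := by
  rw [TernaryCubic.eval_toPoly, hc.xxy, hc.xyy, hc.xyz, hc.yyy, hc.yzz]
  ring

lemma eval_hessian_toPoly (x y : K) : eval ![x, y, 1] (hessian c.toPoly) =
    8 * c.yyz * c.threeDivisionPoly.eval x -
      4 * c.yyz * (6 * c.xxx * x + 2 * c.xxz) * eval ![x, y, 1] c.toPoly := by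
  rw [TernaryCubic.eval_hessian_toPoly, hc.eval_toPoly]
  simp only [hc.xxy, hc.xyy, hc.xyz, hc.yyy, hc.yzz, Matrix.det_fin_three, Matrix.of_apply,
    Matrix.cons_val', Matrix.cons_val_zero, Matrix.cons_val_fin_one, Matrix.cons_val_one,
    Matrix.cons_val, threeDivisionPoly, map_mul, map_pow, map_sub, Polynomial.eval_add,
    Polynomial.eval_mul, Polynomial.eval_C, Polynomial.eval_pow, Polynomial.eval_X,
    Polynomial.eval_sub]
  ring

lemma finite_affine_flexes (h2 : (2 : K) ≠ 0) (h3 : (3 : K) ≠ 0) :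
    {q : K × K | eval ![q.1, q.2, 1] c.toPoly = 0 ∧
      eval ![q.1, q.2, 1] (hessian c.toPoly) = 0}.Finite := by
  have h8 : (8 : K) ≠ 0 := by
    simpa [show (8 : K) = 2 ^ 3 by norm_num] using h2
  have hroots : {x | c.threeDivisionPoly.IsRoot x}.Finite :=
    Polynomial.finite_setOfPred_isRoot (hc.threeDivisionPoly_ne_zero h3)
  have hsqrt (r : K) : {y : K | y ^ 2 = r}.Finite :=
    (Polynomial.nthRoots 2 r).finite_toSet.subset fun y hy => by
      simpa [Polynomial.mem_nthRoots] using hy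
  refine (hroots.biUnion fun x _ => ((hsqrt
    (-(c.xxx * x ^ 3 + c.xxz * x ^ 2 + c.xzz * x + c.zzz) / c.yyz)).image (Prod.mk x))).subset ?_
  rintro ⟨x, y⟩ ⟨hf, hH⟩
  refine Set.mem_biUnion (x := x) ?_ ⟨y, ?_, rfl⟩
  · rw [hc.eval_hessian_toPoly, hf, mul_zero, sub_zero] at hH
    exact (mul_eq_zero.1 hH).resolve_left (mul_ne_zero h8 hc.yyz_ne_zero)
  · rw [hc.eval_toPoly] at hf
    rw [Set.mem_ofPred_eq, eq_div_iff hc.yyz_ne_zero]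
    linear_combination hf

lemma finite_flexLocus (h2 : (2 : K) ≠ 0) (h3 : (3 : K) ≠ 0) : (flexLocus c.toPoly).Finite := by
  have hinf : (![0, 1, 0] : Fin 3 → K) ≠ 0 := fun h => one_ne_zero (congrFun h 1)
  have haff (q : K × K) : (![q.1, q.2, 1] : Fin 3 → K) ≠ 0 := fun h => one_ne_zero (congrFun h 2)
  refine (((hc.finite_affine_flexes h2 h3).image
    fun q => Projectivization.mk K ![q.1, q.2, 1] (haff q)).insert
      (Projectivization.mk K ![0, 1, 0] hinf)).subset fun P hP => ?_
  induction P with | h v hv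
  obtain ⟨x, y, z, rfl⟩ : ∃ x y z, v = ![x, y, z] :=
    ⟨v 0, v 1, v 2, by ext i; fin_cases i <;> rfl⟩
  rcases eq_or_ne z 0 with rfl | hz
  · have hx : x = 0 := by
      simpa [hc.eval_toPoly, hc.xxx_ne_zero] using
        ((mk_mem_flexLocus_iff c.isHomogeneous_toPoly hv).1 hP).1
    exact .inl ((Projectivization.mk_eq_mk_iff' K _ _ hv hinf).2 ⟨y, by simp [hx]⟩)
  · have heq : Projectivization.mk K ![x, y, z] hv =
        Projectivization.mk K ![x / z, y / z, 1] (haff (x / z, y / z)) :=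
      (Projectivization.mk_eq_mk_iff' K _ _ _ _).2 ⟨z, by simp [mul_div_cancel₀, hz]⟩
    rw [heq] at hP ⊢
    exact .inr ⟨(x / z, y / z), (mk_mem_flexLocus_iff c.isHomogeneous_toPoly _).1 hP, rfl⟩

end IsWeierstrass
end Field

end TernaryCubic

section PlaneCubic

variable {K : Type*} [Field K]

lemma finite_flexLocus_of_irreducible (h2 : (2 : K) ≠ 0) (h3 : (3 : K) ≠ 0)
    {f : MvPolynomial (Fin 3) K} (hf : f.IsHomogeneous 3) (hirr : Irreducible f) :
    (flexLocus f).Finite := by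
  by_cases hsing : ∀ P ∈ flexLocus f, gradientAt f P.rep = 0
  · refine Set.Subsingleton.finite fun P hP Q hQ => ?_
    by_contra hPQ
    exact TernaryCubic.not_irreducible_of_gradientAt_eq_zero h3 hf
      (Projectivization.linearIndependent_pair_iff_ne.2 hPQ) (hsing P hP) (hsing Q hQ) hirr
  · push Not at hsing
    obtain ⟨P, ⟨hfP, hHP⟩, hgrad⟩ := hsing
    obtain ⟨g, w, hgw, hw⟩ :=
      TernaryCubic.exists_linSubst_eq_isWeierstrass h2 hf hirr P.rep_nonzero hfP hHP hgrad
    exact flexLocus_finite_of_linSubst hf g (hgw ▸ hw.finite_flexLocus h2 h3)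

theorem flexLocus_infinite_iff_reducible_general [Infinite K] (h2 : (2 : K) ≠ 0)
    (h3 : (3 : K) ≠ 0) {f : MvPolynomial (Fin 3) K} (hf : f.IsHomogeneous 3) :
    (flexLocus f).Infinite ↔ ¬ Irreducible f := by
  refine ⟨fun hinf hirr => hinf (finite_flexLocus_of_irreducible h2 h3 hf hirr), fun hred => ?_⟩
  obtain ⟨l, q, hl, rfl⟩ := exists_linear_mul_of_not_irreducible hf hred
  exact infinite_flexLocus_linear_mul (by simp) hl q

end PlaneCubic

/-- The flex locus of the plane cubic `C(f)` in `ℙ²(ℂ)`: the points whose (nonzero)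
representatives annihilate both `f` and its Hessian `H_f`. It is infinite iff the cubic
form `f` is reducible (for irreducible `f` it is the finite set of flexes). -/
theorem flexLocus_infinite_iff_reducible (f : MvPolynomial (Fin 3) ℂ) (hf : f ≠ 0)
    (hdeg : f.IsHomogeneous 3) :
    {x : Projectivization ℂ (Fin 3 → ℂ) |
        eval x.rep f = 0 ∧ eval x.rep (hess f) = 0}.Infinite ↔
      ¬ Irreducible f :=
  flexLocus_infinite_iff_reducible_general two_ne_zero three_ne_zero hdeg
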